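/- arXiv:2502.18715 — 2 statements merged into one kernel-verified Lean document; each statement's English description precedes it below -/
import Mathlib

section
/- For any n ≥ 1, real numbers p_1, …, p_n ∈ [0,1], and any integer d with 0 ≤ d ≤ n, the Poisson-binomial probability mass function satisfies the discrete Fourier inversion formula PB(d) = (n+1)^{−1} Σ_{l=0}^{n} exp(−𝒊 ω l d) · ∏_{i=1}^{n} (1 − p_i + p_i exp(𝒊 ω l)), where ω = 2π/(n+1) and 𝒊 = √(−1) (the right-hand side, a priori a complex number, equals the real number PB(d)). -/
/-!
The polynomial `∏ i, (1 - p i + p i * X)` has degree at most `n`, and its coefficient of `X ^ d` is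
`PB(d)`. A polynomial of degree less than `N` is recovered from its values at the powers of a
primitive `N`-th root of unity `ζ`, because those powers satisfy the orthogonality relation
`∑ l < N, (ζ ^ (k - d)) ^ l = 0` for `k ≢ d` modulo `N`. Take `N = n + 1` and `ζ = exp (2πi / N)`.
-/

open Finset

/-- The Poisson-binomial probability mass function with success probabilities
`p 1, …, p n`, evaluated at `d`: the enumeration formula
`PB(d) = Σ_{A ⊆ {1,…,n}, |A| = d} (∏_{i ∈ A} p i)(∏_{i ∉ A} (1 − p i))`. -/
noncomputable def PBpmf (n : ℕ) (p : Fin n → ℝ) (d : ℕ) : ℝ :=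
  ∑ A ∈ Finset.powersetCard d (Finset.univ : Finset (Fin n)),
    (∏ i ∈ A, p i) * ∏ i ∈ Aᶜ, (1 - p i)

open Polynomial

section PolynomialInversion

variable {K : Type*} [Field K] {ζ : K} {N : ℕ}

lemma geom_sum_zpow_of_isPrimitiveRoot (hζ : IsPrimitiveRoot ζ N) (j : ℤ) :
    ∑ l ∈ range N, (ζ ^ j) ^ l = if (N : ℤ) ∣ j then (N : K) else 0 := by
  split_ifs with hj
  · simp [(hζ.zpow_eq_one_iff_dvd j).mpr hj]
  · have hne : ζ ^ j ≠ 1 := mt (hζ.zpow_eq_one_iff_dvd j).mp hj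
    have hpow : (ζ ^ j) ^ N = 1 := by
      rw [← zpow_natCast, zpow_comm, hζ.zpow_eq_one, one_zpow]
    rw [geom_sum_eq hne, hpow, sub_self, zero_div]

lemma sum_inv_pow_mul_pow_of_isPrimitiveRoot (hζ : IsPrimitiveRoot ζ N) {d k : ℕ}
    (hd : d < N) (hk : k < N) :
    ∑ l ∈ range N, ((ζ ^ l) ^ d)⁻¹ * (ζ ^ l) ^ k = if k = d then (N : K) else 0 := by
  have hζ0 : ζ ≠ 0 := hζ.ne_zero (by lia)
  have hterm (l : ℕ) : ((ζ ^ l) ^ d)⁻¹ * (ζ ^ l) ^ k = (ζ ^ ((k : ℤ) - d)) ^ l := by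
    rw [zpow_sub₀ hζ0, zpow_natCast, zpow_natCast, div_pow, pow_right_comm ζ l d,
      pow_right_comm ζ l k, div_eq_inv_mul]
  have hdvd : (N : ℤ) ∣ k - d ↔ k = d := by
    rw [← Nat.modEq_iff_dvd]
    exact ⟨fun h => (h.eq_of_lt_of_lt hd hk).symm, fun h => h ▸ rfl⟩
  simp only [hterm, geom_sum_zpow_of_isPrimitiveRoot hζ, hdvd]

lemma sum_inv_pow_mul_eval_of_isPrimitiveRoot (hζ : IsPrimitiveRoot ζ N) {f : K[X]}
    (hf : f.natDegree < N) {d : ℕ} (hd : d < N) :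
    ∑ l ∈ range N, ((ζ ^ l) ^ d)⁻¹ * f.eval (ζ ^ l) = N * f.coeff d :=
  calc
    _ = ∑ l ∈ range N, ∑ k ∈ range N, f.coeff k * (((ζ ^ l) ^ d)⁻¹ * (ζ ^ l) ^ k) := by
      simp only [eval_eq_sum_range' hf, mul_sum, mul_left_comm]
    _ = ∑ k ∈ range N, f.coeff k * ∑ l ∈ range N, ((ζ ^ l) ^ d)⁻¹ * (ζ ^ l) ^ k := by
      rw [sum_comm]
      simp only [mul_sum]
    _ = ∑ k ∈ range N, f.coeff k * if k = d then (N : K) else 0 :=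
      sum_congr rfl fun k hk => by
        rw [sum_inv_pow_mul_pow_of_isPrimitiveRoot hζ hd (mem_range.mp hk)]
    _ = N * f.coeff d := by simp [hd, mul_comm]

lemma coeff_eq_inv_mul_sum_eval_of_isPrimitiveRoot (hζ : IsPrimitiveRoot ζ N) {f : K[X]}
    (hf : f.natDegree < N) {d : ℕ} (hd : d < N) :
    f.coeff d = (N : K)⁻¹ * ∑ l ∈ range N, ((ζ ^ l) ^ d)⁻¹ * f.eval (ζ ^ l) := by
  have : NeZero N := ⟨by lia⟩
  have hN : (N : K) ≠ 0 := hζ.neZero'.out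
  rw [sum_inv_pow_mul_eval_of_isPrimitiveRoot hζ hf hd, inv_mul_cancel_left₀ hN]

end PolynomialInversion

section LinearFactors

variable {ι R : Type*} [CommSemiring R]

lemma natDegree_prod_C_mul_X_add_C_le (s : Finset ι) (p q : ι → R) :
    (∏ i ∈ s, (C (p i) * X + C (q i))).natDegree ≤ #s := by
  have hsum : ∑ i ∈ s, (C (p i) * X + C (q i)).natDegree ≤ #s • 1 :=
    sum_le_card_nsmul s _ 1 fun _ _ => natDegree_linear_le
  simpa using (natDegree_prod_le s _).trans hsum

lemma coeff_prod_C_mul_X_add_C [DecidableEq ι] (s : Finset ι) (p q : ι → R) (d : ℕ) :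
    (∏ i ∈ s, (C (p i) * X + C (q i))).coeff d =
      ∑ A ∈ powersetCard d s, (∏ i ∈ A, p i) * ∏ i ∈ s \ A, q i := by
  have hterm (A : Finset ι) :
      (∏ i ∈ A, C (p i) * X) * ∏ i ∈ s \ A, C (q i) =
        C ((∏ i ∈ A, p i) * ∏ i ∈ s \ A, q i) * X ^ #A := by
    rw [prod_mul_distrib, prod_const, C_mul, map_prod, map_prod, mul_right_comm]
  simp only [prod_add, hterm, finsetSum_coeff, coeff_C_mul_X_pow, powersetCard_eq_filter,
    sum_filter, eq_comm (a := d)]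

end LinearFactors

theorem poisson_binomial_dft_inversion_general {ι K : Type*} [DecidableEq ι] [Field K] {ζ : K}
    {N : ℕ} (hζ : IsPrimitiveRoot ζ N) {s : Finset ι} (hs : #s < N) (p q : ι → K) {d : ℕ}
    (hd : d < N) :
    ∑ A ∈ powersetCard d s, (∏ i ∈ A, p i) * ∏ i ∈ s \ A, q i =
      (N : K)⁻¹ * ∑ l ∈ range N, ((ζ ^ l) ^ d)⁻¹ * ∏ i ∈ s, (q i + p i * ζ ^ l) := by
  have hdeg := (natDegree_prod_C_mul_X_add_C_le s p q).trans_lt hs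
  rw [← coeff_prod_C_mul_X_add_C, coeff_eq_inv_mul_sum_eval_of_isPrimitiveRoot hζ hdeg hd]
  simp only [eval_prod, eval_add, eval_mul, eval_C, eval_X, add_comm (q _)]

lemma isPrimitiveRoot_exp_I_mul_two_pi_div (n : ℕ) :
    IsPrimitiveRoot (Complex.exp (Complex.I * (2 * Real.pi / (n + 1)))) (n + 1) := by
  convert Complex.isPrimitiveRoot_exp (n + 1) n.succ_ne_zero using 2
  push_cast
  ring

lemma exp_mul_natCast (z : ℂ) (l : ℕ) : Complex.exp (z * l) = Complex.exp z ^ l := by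
  rw [mul_comm, Complex.exp_nat_mul]

/-- **Discrete Fourier inversion for the Poisson-binomial pmf.** With
`ω = 2π/(n+1)`, for every `0 ≤ d ≤ n`,
`PB(d) = (n+1)⁻¹ Σ_{l=0}^{n} exp(−𝒊 ω l d) ∏_{i=1}^{n} (1 − p i + p i exp(𝒊 ω l))`. -/
theorem poisson_binomial_dft_inversion (n : ℕ) (hn : 1 ≤ n) (p : Fin n → ℝ)
    (hp0 : ∀ i, 0 ≤ p i) (hp1 : ∀ i, p i ≤ 1) (d : ℕ) (hd : d ≤ n) :
    (PBpmf n p d : ℂ)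
      = ((n : ℂ) + 1)⁻¹ *
          ∑ l ∈ Finset.range (n + 1),
            Complex.exp (-(Complex.I * (2 * Real.pi / (n + 1)) * l * d)) *
              ∏ i, (1 - (p i : ℂ) + (p i : ℂ) *
                Complex.exp (Complex.I * (2 * Real.pi / (n + 1)) * l)) := by
  simpa [PBpmf, compl_eq_univ_sdiff, Complex.exp_neg, exp_mul_natCast] using
    poisson_binomial_dft_inversion_general (isPrimitiveRoot_exp_I_mul_two_pi_div n)
      (s := univ) (by simp) (fun i => (p i : ℂ)) (fun i => 1 - (p i : ℂ)) (Nat.lt_succ_of_le hd)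
end

section
/- Let R be a nonempty finite set, r : R → (0,∞), and j₁ ∈ R. For λ > 0 define p_i(λ) = 1 − exp(−r_i λ) and μ(λ) = Σ_{i ∈ R} p_i(λ). Then as λ → 0⁺, the ratio of the exact probability that only subject j₁ fails to the Poisson approximation of the probability that exactly one subject fails converges to the Cox partial likelihood term: [ p_{j₁}(λ) · ∏_{i ∈ R∖{j₁}} (1 − p_i(λ)) ] / [ μ(λ) e^{−μ(λ)} ] → r_{j₁} / Σ_{i ∈ R} r_i. -/
open Finset Filter Topology

/-- The event probability `p_i(λ) = 1 − exp(−r_i λ)` of subject `i` at an event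
time, given risk score `r i` and baseline hazard increment `λ`. -/
noncomputable def pHaz {ι : Type*} (r : ι → ℝ) (l : ℝ) (i : ι) : ℝ :=
  1 - Real.exp (-(r i * l))

/-- The Poisson-approximation mean `μ(λ) = Σ_{i ∈ R} p_i(λ)`. -/
noncomputable def muHaz {ι : Type*} [Fintype ι] (r : ι → ℝ) (l : ℝ) : ℝ :=
  ∑ i, pHaz r l i

/-!
The ratio factors as `(p_j / μ) * (∏_{i ≠ j} (1 - p_i) / e^{-μ})`. The second factor tends to `1`
because every `p_i` tends to `0`. In the first, numerator and denominator vanish at `λ = 0`, so the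
quotient tends to the ratio of their derivatives there, `r_j / ∑ r_i`.
-/

section Asymptotics

variable {ι : Type*}

theorem tendsto_div_of_hasDerivWithinAt_of_eq_zero {𝕜 : Type*} [NontriviallyNormedField 𝕜]
    {f g : 𝕜 → 𝕜} {f' g' a : 𝕜} {S : Set 𝕜} (hf : HasDerivWithinAt f f' S a)
    (hg : HasDerivWithinAt g g' S a) (hfa : f a = 0) (hga : g a = 0) (hg' : g' ≠ 0) :
    Tendsto (fun x => f x / g x) (𝓝[S \ {a}] a) (𝓝 (f' / g')) := by
  have slope_ratio : Tendsto (fun x => slope f a x / slope g a x) (𝓝[S \ {a}] a) (𝓝 (f' / g')) :=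
    (hasDerivWithinAt_iff_tendsto_slope.mp hf).div (hasDerivWithinAt_iff_tendsto_slope.mp hg) hg'
  refine slope_ratio.congr' ?_
  filter_upwards [self_mem_nhdsWithin] with x hx
  have hxa : x - a ≠ 0 := sub_ne_zero.mpr hx.2
  rw [slope_def_field, slope_def_field, hfa, hga, sub_zero, sub_zero, div_div_div_cancel_right₀ hxa]

theorem tendsto_prod_one_sub_div_exp_neg_sum {α : Type*} {F : Filter α} {p : ι → α → ℝ}
    {s t : Finset ι} (hs : ∀ i ∈ s, Tendsto (p i) F (𝓝 0)) (ht : ∀ i ∈ t, Tendsto (p i) F (𝓝 0)) :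
    Tendsto (fun x => (∏ i ∈ s, (1 - p i x)) / Real.exp (-∑ i ∈ t, p i x)) F (𝓝 1) := by
  have prod_tendsto : Tendsto (fun x => ∏ i ∈ s, (1 - p i x)) F (𝓝 1) := by
    simpa using tendsto_finsetProd s fun i hi => (hs i hi).const_sub 1
  have exp_tendsto : Tendsto (fun x => Real.exp (-∑ i ∈ t, p i x)) F (𝓝 1) := by
    simpa using (tendsto_finsetSum t ht).neg.rexp
  simpa only [Pi.div_def, div_one] using prod_tendsto.div exp_tendsto one_ne_zero

theorem apl_poisson_approx_no_ties_general [Fintype ι] [DecidableEq ι] {p : ι → ℝ → ℝ}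
    {r : ι → ℝ} {a : ℝ} {S : Set ℝ} (hp : ∀ i, HasDerivWithinAt (p i) (r i) S a)
    (hpa : ∀ i, p i a = 0) (hr : ∑ i, r i ≠ 0) (j : ι) :
    Tendsto
      (fun x => (p j x * ∏ i ∈ univ.erase j, (1 - p i x))
        / ((∑ i, p i x) * Real.exp (-∑ i, p i x)))
      (𝓝[S \ {a}] a) (𝓝 (r j / ∑ i, r i)) := by
  have hp_zero (i : ι) : Tendsto (p i) (𝓝[S \ {a}] a) (𝓝 0) :=
    hpa i ▸ (hp i).continuousWithinAt.mono Set.sdiff_subset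
  have cox_term : Tendsto (fun x => p j x / ∑ i, p i x) (𝓝[S \ {a}] a) (𝓝 (r j / ∑ i, r i)) :=
    tendsto_div_of_hasDerivWithinAt_of_eq_zero (hp j) (.fun_sum fun i _ => hp i) (hpa j)
      (sum_eq_zero fun i _ => hpa i) hr
  have correction : Tendsto (fun x => (∏ i ∈ univ.erase j, (1 - p i x)) / Real.exp (-∑ i, p i x))
      (𝓝[S \ {a}] a) (𝓝 1) :=
    tendsto_prod_one_sub_div_exp_neg_sum (fun i _ => hp_zero i) fun i _ => hp_zero i
  simpa only [mul_div_mul_comm, mul_one] using cox_term.mul correction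

end Asymptotics

section EventProbability

variable {ι : Type*} (r : ι → ℝ) (i : ι)

theorem pHaz_zero : pHaz r 0 i = 0 := by
  simp [pHaz]

theorem hasDerivAt_pHaz (l : ℝ) :
    HasDerivAt (fun l => pHaz r l i) (r i * Real.exp (-(r i * l))) l := by
  simpa [pHaz, mul_comm] using (((hasDerivAt_id l).const_mul (r i)).neg.exp).const_sub 1

theorem hasDerivAt_pHaz_zero : HasDerivAt (fun l => pHaz r l i) (r i) 0 := by
  simpa using hasDerivAt_pHaz r i 0

end EventProbability

/-- **The approximate partial likelihood term is the Poisson approximation of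
the accurate one (no ties).** As `λ → 0⁺`, the ratio of the exact probability
that only subject `j₁` fails to the Poisson approximation of the probability
that exactly one subject fails converges to `r j₁ / Σ_{i ∈ R} r i`. -/
theorem apl_poisson_approx_no_ties {ι : Type*} [Fintype ι] [Nonempty ι]
    [DecidableEq ι] (r : ι → ℝ) (hr : ∀ i, 0 < r i) (j₁ : ι) :
    Filter.Tendsto
      (fun l : ℝ =>
        (pHaz r l j₁ * ∏ i ∈ Finset.univ.erase j₁, (1 - pHaz r l i))
          / (muHaz r l * Real.exp (-muHaz r l)))
      (𝓝[>] (0 : ℝ))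
      (𝓝 (r j₁ / ∑ i, r i)) := by
  have sum_ne_zero : ∑ i, r i ≠ 0 := (sum_pos (fun i _ => hr i) univ_nonempty).ne'
  simpa only [muHaz, Set.Ici_sdiff_left] using apl_poisson_approx_no_ties_general (S := Set.Ici 0)
    (fun i => (hasDerivAt_pHaz_zero r i).hasDerivWithinAt) (pHaz_zero r) sum_ne_zero j₁
end
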